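/- There is a universal constant C > 0 such that the following holds. Let P ∈ M_m(ℂ) be an m × m complex projection matrix (P = P* = P²), let Q ∈ M_m(ℂ) be a diagonal projection, and let t ∈ [0,1]. Assume that the diagonal entries of Q P Q are each at most ε, i.e., ⟨P e_i, e_i⟩ ≤ ε for each standard basis vector e_i with Q e_i = e_i. Then there is a diagonal projection Q' ≤ Q (i.e., Q' Q = Q') such that ‖P Q' P − t P Q P‖ ≤ C ε^{1/4}. -/

import Mathlib

open Matrix

/-- The diagonal projection matrix whose `i`-th diagonal entry is `1` exactly when `i ∈ S`. -/
def diagProj {m : ℕ} (S : Finset (Fin m)) : Matrix (Fin m) (Fin m) ℂ :=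
  Matrix.diagonal fun i => if i ∈ S then 1 else 0

/-- The operator norm of a matrix, acting on Euclidean space. -/
noncomputable def opNorm {m : ℕ} (A : Matrix (Fin m) (Fin m) ℂ) : ℝ :=
  ‖Matrix.toEuclideanCLM (𝕜 := ℂ) A‖

/-!
Write `P Q P` as the sum of rank-one matrices `vᵢ vᵢᴴ` with `‖vᵢ‖² ≤ ε`, and use two orthogonal
copies of each `vᵢ`, one per side of a partition of the indices; their variables are `x (i, false)`
and `x (i, true)`. The determinant `q` of `1` plus the sum of the correspondingly weighted rank-one
matrices is real stable and affine in each variable, so the barrier method of Batson, Marcus,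
Spielman and Srivastava applies: with `D i` the derivative in the joint direction of the `i`-th
pair, passing from `q` to `(1 - D i) q` and moving that pair up by `δ` keeps all barriers at most
`φ`, as long as `(1 - φ) * δ ≥ 1`. The barriers start at `2 * ‖vᵢ‖²`.

After all `D i` have been used we are still above the zeros, and the operators are undone one at a
time. The value of `(1 - D i) q` is the average, with weights `1 - t` and `t`, of the values of `q`
with `x (i, false)` lowered by `(1 - t)⁻¹` and with `x (i, true)` lowered by `t⁻¹`. One of the two
is therefore positive, and this puts `i` on one side of the partition. Being above the zeros of `q`
at the end means that a Hermitian matrix is positive semidefinite, which bounds each side of the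
partition from above. As the two sides sum to `P Q P`, the upper bound on one is a lower bound on
the other. Rescaling the `vᵢ` to balance `δ` against `φ` gives an error of order `√ε`.
-/

section MultiAffine

variable {κ R : Type*} [DecidableEq κ] [CommRing R]

/-- The unit-step difference of a function in the coordinate `k`. On multi-affine functions it is
the partial derivative `∂/∂z k`, with no analysis needed to form it. -/
def coordDiff (k : κ) : Module.End R ((κ → R) → R) where
  toFun q z := q (z + Pi.single k 1) - q z
  map_add' p q := by ext z; simp only [Pi.add_apply]; ring
  map_smul' c q := by ext z; simp only [Pi.smul_apply, smul_eq_mul, RingHom.id_apply]; ring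

lemma coordDiff_apply (k : κ) (q : (κ → R) → R) (z : κ → R) :
    coordDiff k q z = q (z + Pi.single k 1) - q z := rfl

lemma commute_coordDiff (k l : κ) : Commute (coordDiff (R := R) k) (coordDiff l) := by
  refine LinearMap.ext fun q => funext fun z => ?_
  simp only [Module.End.mul_apply, coordDiff_apply, add_right_comm z]
  ring

/-- The functions of a family of variables that are affine in each variable separately. -/
def multiAffine (κ R : Type*) [DecidableEq κ] [CommRing R] : Submodule R ((κ → R) → R) where
  carrier := {q | ∀ z k a, q (z + Pi.single k a) = q z + a * coordDiff k q z}
  add_mem' hp hq z k a := by simp only [Pi.add_apply, hp z k a, hq z k a, map_add]; ring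
  zero_mem' z k a := by simp
  smul_mem' c q hq z k a := by
    simp only [Pi.smul_apply, smul_eq_mul, hq z k a, map_smul]; ring

lemma apply_sub_single {q : (κ → R) → R} (hq : q ∈ multiAffine κ R) (z : κ → R) (k : κ) (a : R) :
    q (z - Pi.single k a) = q z - a * coordDiff k q z := by
  rw [sub_eq_add_neg, ← Pi.single_neg, hq, neg_mul, ← sub_eq_add_neg]

lemma coordDiff_mem_multiAffine {q : (κ → R) → R} (hq : q ∈ multiAffine κ R) (k : κ) :
    coordDiff k q ∈ multiAffine κ R := by
  intro z l a
  have hcomm : coordDiff l (coordDiff k q) z = coordDiff k (coordDiff l q) z :=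
    congrFun (LinearMap.congr_fun (commute_coordDiff l k) q) z
  rw [hcomm, coordDiff_apply k q, add_right_comm, hq _ l a, hq _ l a, coordDiff_apply k q,
    coordDiff_apply k (coordDiff l q)]
  ring

lemma coordDiff_coordDiff_self {q : (κ → R) → R} (hq : q ∈ multiAffine κ R) (k : κ) :
    coordDiff k (coordDiff k q) = 0 := by
  ext z
  have htwo : q (z + Pi.single k 1 + Pi.single k 1) = q z + (1 + 1) * coordDiff k q z := by
    rw [add_assoc, ← Pi.single_add, hq]
  rw [coordDiff_apply, coordDiff_apply, htwo, coordDiff_apply, Pi.zero_apply]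
  ring

lemma continuous_of_mem_multiAffine [Finite κ] [TopologicalSpace R] [IsTopologicalRing R]
    {q : (κ → R) → R} (hq : q ∈ multiAffine κ R) : Continuous q := by
  cases nonempty_fintype κ
  suffices hpartial : ∀ s : Finset κ, ∀ p ∈ multiAffine κ R,
      Continuous fun z : κ → R => p (∑ k ∈ s, Pi.single k (z k)) by
    simpa only [Finset.univ_sum_single] using hpartial Finset.univ q hq
  intro s
  induction s using Finset.induction_on with
  | empty => intro p _; simp only [Finset.sum_empty]; exact continuous_const
  | insert k s hk ih =>
    intro p hp
    simp only [Finset.sum_insert hk, add_comm (Pi.single k _), hp _ k]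
    exact (ih p hp).add ((continuous_apply k).mul (ih _ (coordDiff_mem_multiAffine hp k)))

variable [Fintype κ]

/-- The derivative of a multi-affine function in the direction `v`. -/
def dirDeriv (v : κ → R) : Module.End R ((κ → R) → R) := ∑ k, v k • coordDiff k

lemma dirDeriv_apply (v : κ → R) (q : (κ → R) → R) (z : κ → R) :
    dirDeriv v q z = ∑ k, v k * coordDiff k q z := by
  simp [dirDeriv]

lemma commute_coordDiff_dirDeriv (k : κ) (v : κ → R) : Commute (coordDiff k) (dirDeriv v) :=
  Commute.sum_right _ _ _ fun l _ => (commute_coordDiff k l).smul_right _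

lemma commute_dirDeriv (v w : κ → R) : Commute (dirDeriv v) (dirDeriv w) :=
  Commute.sum_left _ _ _ fun k _ => (commute_coordDiff_dirDeriv k w).smul_left _

lemma dirDeriv_mem_multiAffine {q : (κ → R) → R} (hq : q ∈ multiAffine κ R) (v : κ → R) :
    dirDeriv v q ∈ multiAffine κ R := by
  rw [dirDeriv, LinearMap.sum_apply]
  exact sum_mem fun k _ => Submodule.smul_mem _ _ (coordDiff_mem_multiAffine hq k)

/-- The direction in which the variables `k` and `l` move together. -/
def pairDir (k l : κ) : κ → R := Pi.single k 1 + Pi.single l 1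

lemma dirDeriv_pairDir (k l : κ) :
    dirDeriv (pairDir k l) = coordDiff (R := R) k + coordDiff l := by
  simp [dirDeriv, pairDir, add_smul, Finset.sum_add_distrib, Pi.single_apply, ite_smul]

lemma dirDeriv_pairDir_sq {q : (κ → R) → R} (hq : q ∈ multiAffine κ R) (k l : κ) :
    dirDeriv (pairDir k l) (dirDeriv (pairDir k l) q) = (2 : R) • coordDiff l (coordDiff k q) := by
  have hcomm : coordDiff k (coordDiff l q) = coordDiff l (coordDiff k q) :=
    LinearMap.congr_fun (commute_coordDiff k l) q
  simp only [dirDeriv_pairDir, LinearMap.add_apply, map_add, coordDiff_coordDiff_self hq, hcomm]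
  module

lemma dirDeriv_pairDir_cube {q : (κ → R) → R} (hq : q ∈ multiAffine κ R) (k l : κ) :
    dirDeriv (pairDir k l) (dirDeriv (pairDir k l) (dirDeriv (pairDir k l) q)) = 0 := by
  have hcomm : coordDiff k (coordDiff l (coordDiff k q)) = 0 := by
    rw [show coordDiff k (coordDiff l (coordDiff k q)) = coordDiff l (coordDiff k (coordDiff k q))
      from LinearMap.congr_fun (commute_coordDiff k l) _, coordDiff_coordDiff_self hq, map_zero]
  rw [dirDeriv_pairDir_sq hq, map_smul, dirDeriv_pairDir, LinearMap.add_apply, hcomm,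
    coordDiff_coordDiff_self (coordDiff_mem_multiAffine hq k), add_zero, smul_zero]

lemma apply_add_smul_pairDir {κ : Type*} [DecidableEq κ] [Fintype κ] {q : (κ → ℝ) → ℝ}
    (hq : q ∈ multiAffine κ ℝ) (k l : κ) (x : κ → ℝ) (u : ℝ) :
    q (x + u • pairDir k l) = q x + dirDeriv (pairDir k l) q x * u +
      dirDeriv (pairDir k l) (dirDeriv (pairDir k l) q) x / 2 * u ^ 2 := by
  have hsplit : x + u • pairDir k l = x + Pi.single k u + Pi.single l u := by
    rw [pairDir, smul_add, ← Pi.single_smul, ← Pi.single_smul, smul_eq_mul, mul_one, add_assoc]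
  rw [hsplit, hq _ l, hq _ k, coordDiff_mem_multiAffine hq l, dirDeriv_pairDir_sq hq,
    dirDeriv_pairDir, show coordDiff k (coordDiff l q) = coordDiff l (coordDiff k q) from
      LinearMap.congr_fun (commute_coordDiff k l) q]
  simp only [LinearMap.add_apply, Pi.add_apply, Pi.smul_apply, smul_eq_mul]
  ring

end MultiAffine

section RealStable

variable {κ : Type*} [DecidableEq κ]

/-- `Q` is a complex multi-affine function that has no zero with all variables in the open upper
half-plane and that restricts to `q` on real points. -/
structure IsStableExtension (Q : (κ → ℂ) → ℂ) (q : (κ → ℝ) → ℝ) : Prop where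
  mem_multiAffine : Q ∈ multiAffine κ ℂ
  ne_zero : ∀ z : κ → ℂ, (∀ k, 0 < (z k).im) → Q z ≠ 0
  apply_ofReal : ∀ x : κ → ℝ, Q (fun k => x k) = q x

/-- Real stability of a multi-affine polynomial, given as a function on real points together with
its extension to complex points. -/
def RealStable (q : (κ → ℝ) → ℝ) : Prop := ∃ Q, IsStableExtension Q q

lemma ofReal_add_single (x : κ → ℝ) (k : κ) (a : ℝ) :
    (fun j => ((x + Pi.single k a : κ → ℝ) j : ℂ)) =
      (fun j => (x j : ℂ)) + Pi.single k (a : ℂ) := by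
  ext j
  by_cases h : j = k <;> simp [h]

lemma coordDiff_apply_ofReal {Q : (κ → ℂ) → ℂ} {q : (κ → ℝ) → ℝ}
    (hQ : ∀ x : κ → ℝ, Q (fun k => x k) = q x) (k : κ) (x : κ → ℝ) :
    coordDiff k Q (fun j => x j) = coordDiff k q x := by
  rw [coordDiff_apply, coordDiff_apply, ← Complex.ofReal_one, ← ofReal_add_single, hQ, hQ,
    Complex.ofReal_sub]

lemma RealStable.mem_multiAffine {q : (κ → ℝ) → ℝ} (hq : RealStable q) :
    q ∈ multiAffine κ ℝ := by
  obtain ⟨Q, hQ⟩ := hq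
  intro x k a
  apply Complex.ofReal_injective
  rw [← hQ.apply_ofReal, ofReal_add_single, hQ.mem_multiAffine, hQ.apply_ofReal,
    coordDiff_apply_ofReal hQ.apply_ofReal]
  push_cast
  rfl

namespace IsStableExtension

variable {Q : (κ → ℂ) → ℂ} {q : (κ → ℝ) → ℝ}

-- Otherwise moving `z k` by `-Q z / ∂ₖQ z`, which has nonnegative imaginary part, reaches a zero.
lemma coordDiff_div_im_neg (hQ : IsStableExtension Q q) {z : κ → ℂ} (hz : ∀ k, 0 < (z k).im)
    {k : κ} (hk : coordDiff k Q z ≠ 0) : (coordDiff k Q z / Q z).im < 0 := by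
  by_contra! hnonneg
  refine hQ.ne_zero (z + Pi.single k (-(coordDiff k Q z / Q z)⁻¹)) (fun j => ?_) ?_
  · have hinv : 0 ≤ (-(coordDiff k Q z / Q z)⁻¹).im := by
      rw [Complex.neg_im, Complex.inv_im, neg_div, neg_neg]
      exact div_nonneg hnonneg (Complex.normSq_nonneg _)
    rcases eq_or_ne j k with rfl | hj
    · simpa using add_pos_of_pos_of_nonneg (hz j) hinv
    · simpa [hj] using hz j
  · rw [hQ.mem_multiAffine, inv_div, neg_mul, div_mul_cancel₀ _ hk, add_neg_cancel]

lemma coordDiff_div_im_nonpos (hQ : IsStableExtension Q q) {z : κ → ℂ} (hz : ∀ k, 0 < (z k).im)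
    (k : κ) : (coordDiff k Q z / Q z).im ≤ 0 := by
  by_cases hk : coordDiff k Q z = 0
  · simp [hk]
  · exact (hQ.coordDiff_div_im_neg hz hk).le

lemma coordDiff_mul_conj_im_nonpos [Finite κ] (hQ : IsStableExtension Q q) {z : κ → ℂ}
    (hz : ∀ k, 0 ≤ (z k).im) (k : κ) : (coordDiff k Q z * star (Q z)).im ≤ 0 := by
  have hcont : Continuous fun s : ℝ => (coordDiff k Q (fun j => z j + s * Complex.I) *
      star (Q fun j => z j + s * Complex.I)).im := by
    have hQc := continuous_of_mem_multiAffine hQ.mem_multiAffine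
    have hdQc := continuous_of_mem_multiAffine (coordDiff_mem_multiAffine hQ.mem_multiAffine k)
    fun_prop
  have hlim := (hcont.tendsto 0).mono_left (nhdsWithin_le_nhds (s := Set.Ioi 0))
  simp only [Complex.ofReal_zero, zero_mul, add_zero] at hlim
  refine le_of_tendsto hlim (Filter.eventually_of_mem self_mem_nhdsWithin fun s hs => ?_)
  have hdiv := hQ.coordDiff_div_im_nonpos (z := fun j => z j + s * Complex.I)
    (fun j => by simpa using add_pos_of_nonneg_of_pos (hz j) hs) k
  rw [div_eq_mul_inv, Complex.inv_def, ← mul_assoc, Complex.im_mul_ofReal] at hdiv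
  exact nonpos_of_mul_nonpos_left hdiv
    (inv_pos.2 (Complex.normSq_pos.2 (hQ.ne_zero _ fun j => by
      simpa using add_pos_of_nonneg_of_pos (hz j) hs)))

variable [Fintype κ]

lemma sub_dirDeriv (hQ : IsStableExtension Q q) {v : κ → ℝ} (hv : 0 ≤ v) :
    IsStableExtension (Q - dirDeriv (fun k => (v k : ℂ)) Q) (q - dirDeriv v q) where
  mem_multiAffine :=
    sub_mem hQ.mem_multiAffine (dirDeriv_mem_multiAffine hQ.mem_multiAffine _)
  ne_zero z hz := by
    intro hzero
    have hsum : ∑ k, v k * (coordDiff k Q z / Q z) = (1 : ℂ) := by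
      have hQz : Q z = ∑ k, v k * coordDiff k Q z := by
        rw [← sub_eq_zero, ← dirDeriv_apply]
        exact hzero
      simp only [← mul_div_assoc, ← Finset.sum_div, ← hQz, div_self (hQ.ne_zero z hz)]
    have him : ∑ k, v k * (coordDiff k Q z / Q z).im = 0 := by
      simpa using congrArg Complex.im hsum
    have hterm := (Finset.sum_eq_zero_iff_of_nonpos fun k _ =>
      mul_nonpos_of_nonneg_of_nonpos (hv k) (hQ.coordDiff_div_im_nonpos hz k)).1 him
    refine one_ne_zero (hsum.symm.trans (Finset.sum_eq_zero fun k hk => ?_))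
    rcases mul_eq_zero.1 (hterm k hk) with hvk | hk0
    · rw [hvk, Complex.ofReal_zero, zero_mul]
    · by_cases hk' : coordDiff k Q z = 0
      · rw [hk', zero_div, mul_zero]
      · exact absurd hk0 (hQ.coordDiff_div_im_neg hz hk').ne
  apply_ofReal x := by
    simp only [Pi.sub_apply, dirDeriv_apply,
      hQ.apply_ofReal, coordDiff_apply_ofReal hQ.apply_ofReal]
    push_cast
    rfl

end IsStableExtension

namespace RealStable

variable {q : (κ → ℝ) → ℝ}

lemma coordDiff_coordDiff_mul_le [Finite κ] (hq : RealStable q) (k l : κ) (x : κ → ℝ) :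
    coordDiff l (coordDiff k q) x * q x ≤ coordDiff k q x * coordDiff l q x := by
  obtain ⟨Q, hQ⟩ := hq
  have hreal := coordDiff_apply_ofReal hQ.apply_ofReal
  have him := hQ.coordDiff_mul_conj_im_nonpos (z := (fun j => (x j : ℂ)) + Pi.single l Complex.I)
    (fun j => by by_cases h : j = l <;> simp [h]) k
  rw [coordDiff_mem_multiAffine hQ.mem_multiAffine k, hQ.mem_multiAffine, hreal, hreal,
    hQ.apply_ofReal, coordDiff_apply_ofReal (hreal k)] at him
  have hexpand (a b c d : ℝ) : ((a + Complex.I * b) * star (c + Complex.I * d)).im =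
      b * c - a * d := by
    simp [sub_eq_neg_add]
  rwa [hexpand, sub_nonpos] at him

variable [Fintype κ]

lemma sub_dirDeriv (hq : RealStable q) {v : κ → ℝ} (hv : 0 ≤ v) :
    RealStable (q - dirDeriv v q) :=
  let ⟨_, hQ⟩ := hq
  ⟨_, hQ.sub_dirDeriv hv⟩

lemma coordDiff_dirDeriv_mul_le (hq : RealStable q) (k : κ) {w : κ → ℝ} (hw : 0 ≤ w)
    (x : κ → ℝ) : coordDiff k (dirDeriv w q) x * q x ≤ coordDiff k q x * dirDeriv w q x := by
  have hcomm : coordDiff k (dirDeriv w q) = dirDeriv w (coordDiff k q) :=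
    LinearMap.congr_fun (commute_coordDiff_dirDeriv k w) q
  rw [hcomm, dirDeriv_apply, dirDeriv_apply, Finset.sum_mul, Finset.mul_sum]
  refine Finset.sum_le_sum fun l _ => ?_
  rw [mul_assoc, mul_left_comm (coordDiff k q x)]
  exact mul_le_mul_of_nonneg_left (hq.coordDiff_coordDiff_mul_le k l x) (hw l)

lemma dirDeriv_dirDeriv_mul_le (hq : RealStable q) {v w : κ → ℝ} (hv : 0 ≤ v) (hw : 0 ≤ w)
    (x : κ → ℝ) : dirDeriv v (dirDeriv w q) x * q x ≤ dirDeriv v q x * dirDeriv w q x := by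
  rw [dirDeriv_apply v, dirDeriv_apply v, Finset.sum_mul, Finset.sum_mul]
  refine Finset.sum_le_sum fun k _ => ?_
  rw [mul_assoc, mul_assoc]
  exact mul_le_mul_of_nonneg_left (hq.coordDiff_dirDeriv_mul_le k hw x) (hv k)

end RealStable

end RealStable

section Quadratic

variable {f₀ f₁ f₂ g₀ g₁ g₂ : ℝ}

lemma coeff_ineq_of_quadratic_nonpos {a b c : ℝ} (hf₀ : 0 < f₀) (hf₁ : 0 ≤ f₁) (hf₂ : 0 ≤ f₂)
    (hrel : f₀ * c - f₁ * b + f₂ * a = 0) (hneg : ∀ u : ℝ, a + 2 * b * u + c * u ^ 2 ≤ 0) :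
    a ≤ 0 ∧ b ≤ 0 ∧ f₁ * a ≤ f₀ * b := by
  have ha : a ≤ 0 := by simpa using hneg 0
  have hdiscrim : b ^ 2 ≤ a * c := by
    have h := discrim_le_zero (a := -c) (b := -(2 * b)) (c := -a) fun u => by linarith [hneg u]
    rw [discrim] at h
    linarith
  have hc : c ≤ 0 := by
    rcases ha.lt_or_eq with ha' | rfl
    · nlinarith [sq_nonneg b]
    · have hb : b = 0 := by nlinarith [sq_nonneg b]
      simpa [hb] using hneg 1
  have hb : b ≤ 0 := by
    by_contra! hb
    have hc' : c = 0 := by nlinarith [mul_nonneg hf₁ hb.le, mul_nonpos_of_nonneg_of_nonpos hf₂ ha]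
    nlinarith
  refine ⟨ha, hb, ?_⟩
  rcases hb.lt_or_eq with hb' | rfl
  · have hmul : f₀ * b * b ≤ f₁ * a * b := by
      nlinarith [mul_le_mul_of_nonneg_left hdiscrim hf₀.le, mul_nonneg hf₂ (sq_nonneg a)]
    exact (mul_le_mul_right_of_neg hb').1 hmul
  · linarith [mul_nonpos_of_nonneg_of_nonpos hf₁ ha]

-- The conclusion is the tangent-line inequality at `δ` for `g / f`, which is convex on `[0, ∞)`.
lemma quadratic_div_sub_div_le (hf₀ : 0 < f₀) (hf₁ : 0 ≤ f₁) (hf₂ : 0 ≤ f₂)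
    (hW : ∀ u : ℝ, (g₁ + 2 * g₂ * u) * (f₀ + f₁ * u + f₂ * u ^ 2) ≤
      (f₁ + 2 * f₂ * u) * (g₀ + g₁ * u + g₂ * u ^ 2)) {δ F F' G G' : ℝ} (hδ : 0 ≤ δ)
    (hF : F = f₀ + f₁ * δ + f₂ * δ ^ 2) (hF' : F' = f₁ + 2 * f₂ * δ)
    (hG : G = g₀ + g₁ * δ + g₂ * δ ^ 2) (hG' : G' = g₁ + 2 * g₂ * δ) :
    G / F - g₀ / f₀ ≤ δ * (G' / F - G / F * (F' / F)) := by
  have hFpos : 0 < F := hF ▸ by positivity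
  obtain ⟨ha, hb, hab⟩ := coeff_ineq_of_quadratic_nonpos (a := g₁ * f₀ - g₀ * f₁)
    (b := g₂ * f₀ - g₀ * f₂) (c := g₂ * f₁ - g₁ * f₂) hf₀ hf₁ hf₂ (by ring)
    fun u => by linarith [hW u]
  have hcross : (G * f₀ - g₀ * F) * F ≤ δ * f₀ * (G' * F - G * F') := by
    have h₁ := mul_nonneg (sq_nonneg δ) (sub_nonneg.2 hab)
    have h₂ := mul_nonneg (mul_nonneg (pow_nonneg hδ 3) hf₂) (neg_nonneg.2 ha)
    have h₃ := mul_nonneg (mul_nonneg (pow_nonneg hδ 4) hf₂) (neg_nonneg.2 hb)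
    subst hF hF' hG hG'
    linarith
  calc G / F - g₀ / f₀ = (G * f₀ - g₀ * F) * F / (f₀ * F ^ 2) := by field_simp
    _ ≤ δ * f₀ * (G' * F - G * F') / (f₀ * F ^ 2) := by gcongr
    _ = δ * (G' / F - G / F * (F' / F)) := by field_simp

end Quadratic

section Barrier

lemma nonneg_of_forall_add_mul_nonneg {a b : ℝ} (h : ∀ u : ℝ, 0 ≤ u → 0 ≤ a + u * b) : 0 ≤ b := by
  have ha : 0 ≤ a := by simpa using h 0 le_rfl
  by_contra! hb
  have hneg : a + (a + 1) / -b * b = -1 := by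
    field_simp [hb.ne]
    ring
  linarith [h ((a + 1) / -b) (div_nonneg (by linarith) (by linarith))]

variable {κ : Type*} {q : (κ → ℝ) → ℝ} {x y v w : κ → ℝ}

/-- Positivity on the closed orthant with vertex `x`, that is, `x` lies above the zeros of `q`. -/
def PosAbove (q : (κ → ℝ) → ℝ) (x : κ → ℝ) : Prop := ∀ y, x ≤ y → 0 < q y

lemma PosAbove.pos (h : PosAbove q x) : 0 < q x := h x le_rfl

lemma PosAbove.mono (h : PosAbove q x) (hxy : x ≤ y) : PosAbove q y :=
  fun z hz => h z (hxy.trans hz)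

variable [DecidableEq κ]

lemma coordDiff_nonneg (hq : q ∈ multiAffine κ ℝ) (h : ∀ y, x ≤ y → 0 ≤ q y) (k : κ)
    (hxy : x ≤ y) : 0 ≤ coordDiff k q y :=
  nonneg_of_forall_add_mul_nonneg fun u hu =>
    hq y k u ▸ h _ (hxy.trans (le_add_of_nonneg_right (Pi.single_nonneg.2 hu)))

lemma pairDir_nonneg (k l : κ) : (0 : κ → ℝ) ≤ pairDir k l :=
  add_nonneg (Pi.single_nonneg.2 zero_le_one) (Pi.single_nonneg.2 zero_le_one)

variable [Fintype κ]

lemma dirDeriv_nonneg (hq : q ∈ multiAffine κ ℝ) (h : ∀ y, x ≤ y → 0 ≤ q y) (hv : 0 ≤ v)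
    (hxy : x ≤ y) : 0 ≤ dirDeriv v q y := by
  rw [dirDeriv_apply]
  exact Finset.sum_nonneg fun k _ => mul_nonneg (hv k) (coordDiff_nonneg hq h k hxy)

/-- The barrier function: the logarithmic derivative of `q` in the direction `v`. -/
noncomputable def barrier (v : κ → ℝ) (q : (κ → ℝ) → ℝ) (x : κ → ℝ) : ℝ := dirDeriv v q x / q x

lemma barrier_add_single_le (hq : RealStable q) (hw : 0 ≤ w) (hx : PosAbove q x) (k : κ) {a : ℝ}
    (ha : 0 ≤ a) : barrier w q (x + Pi.single k a) ≤ barrier w q x := by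
  have hpos := hx (x + Pi.single k a) (le_add_of_nonneg_right (Pi.single_nonneg.2 ha))
  have hqm := hq.mem_multiAffine
  rw [barrier, barrier, div_le_div_iff₀ hpos hx.pos, hqm, dirDeriv_mem_multiAffine hqm]
  linarith [mul_le_mul_of_nonneg_left (hq.coordDiff_dirDeriv_mul_le k hw x) ha]

lemma barrier_le_barrier (hq : RealStable q) (hw : 0 ≤ w) (hx : PosAbove q x) (hxy : x ≤ y) :
    barrier w q y ≤ barrier w q x := by
  have hnonneg (k : κ) : 0 ≤ (y - x) k := sub_nonneg.2 (hxy k)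
  suffices hpartial : ∀ s : Finset κ,
      barrier w q (x + ∑ k ∈ s, Pi.single k ((y - x) k)) ≤ barrier w q x by
    simpa only [Finset.univ_sum_single, add_sub_cancel] using hpartial Finset.univ
  intro s
  induction s using Finset.induction_on with
  | empty => simp
  | insert k s hk ih =>
    rw [Finset.sum_insert hk, add_comm (Pi.single k _), ← add_assoc]
    refine (barrier_add_single_le hq hw (hx.mono ?_) k (hnonneg k)).trans ih
    exact le_add_of_nonneg_right (Finset.sum_nonneg fun l _ => Pi.single_nonneg.2 (hnonneg l))

lemma PosAbove.sub_dirDeriv (hq : RealStable q) (hv : 0 ≤ v) (hx : PosAbove q x)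
    (hbar : barrier v q x < 1) : PosAbove (q - dirDeriv v q) x := by
  intro y hxy
  have hlt := (barrier_le_barrier hq hv hx hxy).trans_lt hbar
  exact sub_pos.2 ((div_lt_one (hx y hxy)).1 hlt)

lemma barrier_add_smul_pairDir_sub_le (hq : RealStable q) (hx : PosAbove q x) (k l : κ)
    (hw : 0 ≤ w) {δ : ℝ} (hδ : 0 ≤ δ) {x' : κ → ℝ} (hx' : x' = x + δ • pairDir k l) :
    barrier w q x' - barrier w q x ≤
      δ * (dirDeriv (pairDir k l) (dirDeriv w q) x' / q x' -
        barrier w q x' * barrier (pairDir k l) q x') := by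
  have hv := pairDir_nonneg k l
  have hqm := hq.mem_multiAffine
  have hdm := dirDeriv_mem_multiAffine hqm
  have htaylor {p : (κ → ℝ) → ℝ} (hp : p ∈ multiAffine κ ℝ) (u : ℝ) :
      dirDeriv (pairDir k l) p (x + u • pairDir k l) = dirDeriv (pairDir k l) p x +
        2 * (dirDeriv (pairDir k l) (dirDeriv (pairDir k l) p) x / 2) * u := by
    rw [apply_add_smul_pairDir (dirDeriv_mem_multiAffine hp _), dirDeriv_pairDir_cube hp,
      Pi.zero_apply]
    ring
  have hd_nonneg {y : κ → ℝ} (hxy : x ≤ y) := dirDeriv_nonneg hqm (fun y hy => (hx y hy).le) hv hxy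
  refine quadratic_div_sub_div_le hx.pos (hd_nonneg le_rfl)
    (div_nonneg (dirDeriv_nonneg (hdm _) (fun _ => hd_nonneg) hv le_rfl) zero_le_two) (fun u => ?_)
    hδ (hx' ▸ apply_add_smul_pairDir hqm k l x δ) (hx' ▸ htaylor hqm δ)
    (hx' ▸ apply_add_smul_pairDir (hdm w) k l x δ) (hx' ▸ htaylor (hdm w) δ)
  rw [← htaylor hqm, ← htaylor (hdm w), ← apply_add_smul_pairDir hqm,
    ← apply_add_smul_pairDir (hdm w)]
  exact hq.dirDeriv_dirDeriv_mul_le hv hw _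

lemma barrier_sub_dirDeriv (hy : q y ≠ 0) :
    barrier w (q - dirDeriv v q) y =
      (barrier w q y - dirDeriv v (dirDeriv w q) y / q y) / (1 - barrier v q y) := by
  have hcomm : dirDeriv w (dirDeriv v q) = dirDeriv v (dirDeriv w q) :=
    LinearMap.congr_fun (commute_dirDeriv w v) q
  rw [barrier, map_sub, Pi.sub_apply, Pi.sub_apply, hcomm, barrier, barrier, ← sub_div,
    one_sub_div hy, div_div_div_cancel_right₀ hy]

lemma dirDeriv_dirDeriv_div_le (hq : RealStable q) (hv : 0 ≤ v) (hw : 0 ≤ w) (hy : 0 < q y) :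
    dirDeriv v (dirDeriv w q) y / q y ≤ barrier w q y * barrier v q y := by
  rw [barrier, barrier, div_mul_div_comm, div_le_div_iff₀ hy (mul_pos hy hy)]
  linarith [mul_le_mul_of_nonneg_right (hq.dirDeriv_dirDeriv_mul_le hv hw y) hy.le]

lemma barrier_sub_pairDir_le (hq : RealStable q) (hx : PosAbove q x) (k l : κ) (hw : 0 ≤ w)
    {δ φ : ℝ} (hδ : 0 < δ) (hφ : 1 ≤ (1 - φ) * δ) (hbv : barrier (pairDir k l) q x ≤ φ)
    (hbw : barrier w q x ≤ φ) :
    barrier w (q - dirDeriv (pairDir k l) q) (x + δ • pairDir k l) ≤ φ := by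
  obtain ⟨x', hx'⟩ : ∃ x', x' = x + δ • pairDir k l := ⟨_, rfl⟩
  have hv := pairDir_nonneg k l
  have hxx' : x ≤ x' := hx' ▸ le_add_of_nonneg_right (smul_nonneg hδ.le hv)
  have hpos := hx x' hxx'
  have hbv' := (barrier_le_barrier hq hv hx hxx').trans hbv
  have htangent := barrier_add_smul_pairDir_sub_le hq hx k l hw hδ.le hx'
  have hslope := dirDeriv_dirDeriv_div_le hq hv hw hpos
  rw [← hx', barrier_sub_dirDeriv hpos.ne']
  generalize barrier (pairDir k l) q x' = ρ, barrier w q x' = r,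
    dirDeriv (pairDir k l) (dirDeriv w q) x' / q x' = t at *
  have hone : 0 < 1 - φ := pos_of_mul_pos_left (one_pos.trans_le hφ) hδ.le
  rw [div_le_iff₀ (by linarith)]
  suffices hkey : (r - φ) * (1 - ρ) ≤ t - r * ρ by linarith
  calc (r - φ) * (1 - ρ)
      ≤ δ * (t - r * ρ) * (1 - ρ) := mul_le_mul_of_nonneg_right (by linarith) (by linarith)
    _ = (t - r * ρ) * ((1 - ρ) * δ) := by ring
    _ ≤ (t - r * ρ) * 1 := mul_le_mul_of_nonpos_left
        (hφ.trans (mul_le_mul_of_nonneg_right (by linarith) hδ.le)) (by linarith)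
    _ = t - r * ρ := mul_one _

end Barrier

section Selection

section Pair

variable {κ : Type*} [DecidableEq κ] {q : (κ → ℝ) → ℝ} {y : κ → ℝ}

lemma PosAbove.sub_single [Finite κ] (hq : RealStable q) (hy : PosAbove q y) (k : κ)
    {a : ℝ} (ha : 0 ≤ a) (hpos : 0 < q (y - Pi.single k a)) : PosAbove q (y - Pi.single k a) := by
  cases nonempty_fintype κ
  have hqm := hq.mem_multiAffine
  have hbarrier (z : κ → ℝ) (hz : 0 < q z) :
      0 < q (z - Pi.single k a) ↔ a * barrier (Pi.single k 1) q z < 1 := by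
    have hdir : dirDeriv (Pi.single k 1) q = coordDiff k q := by
      simp [dirDeriv, Pi.single_apply, ite_smul]
    rw [apply_sub_single hqm, sub_pos, barrier, hdir, mul_div_assoc', div_lt_one hz]
  intro z hz
  have hyz : y ≤ z + Pi.single k a := sub_le_iff_le_add.1 hz
  rw [← add_sub_cancel_right z (Pi.single k a), hbarrier _ (hy _ hyz)]
  exact (mul_le_mul_of_nonneg_left
    (barrier_le_barrier hq (Pi.single_nonneg.2 zero_le_one) hy hyz) ha).trans_lt
    ((hbarrier y hy.pos).1 hpos)

variable [Fintype κ]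

-- The cube of `D := dirDeriv (pairDir k l)` vanishes, so `1 - D` is inverted by `1 + D + D ^ 2`.
lemma PosAbove.of_sub_pairDir (hq : q ∈ multiAffine κ ℝ) {k l : κ}
    (h : PosAbove (q - dirDeriv (pairDir k l) q) y) : PosAbove q y := by
  have hv := pairDir_nonneg k l
  obtain ⟨T, hT⟩ : ∃ T, T = q - dirDeriv (pairDir k l) q := ⟨_, rfl⟩
  rw [← hT] at h
  have hTm : T ∈ multiAffine κ ℝ := hT ▸ sub_mem hq (dirDeriv_mem_multiAffine hq _)
  have hd {z : κ → ℝ} (hz : y ≤ z) : 0 ≤ dirDeriv (pairDir k l) T z :=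
    dirDeriv_nonneg hTm (fun z hz => (h z hz).le) hv hz
  have hdd {z : κ → ℝ} (hz : y ≤ z) : 0 ≤ dirDeriv (pairDir k l) (dirDeriv (pairDir k l) T) z :=
    dirDeriv_nonneg (dirDeriv_mem_multiAffine hTm _) (fun _ => hd) hv hz
  have hinv :
      q = T + dirDeriv (pairDir k l) T + dirDeriv (pairDir k l) (dirDeriv (pairDir k l) T) := by
    simp only [hT, map_sub, dirDeriv_pairDir_cube hq]
    abel
  intro z hz
  rw [hinv]
  exact add_pos_of_pos_of_nonneg (add_pos_of_pos_of_nonneg (h z hz) (hd hz)) (hdd hz)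

-- `(q - D q) y` is the average of `q (y - Pi.single k p⁻¹)` and `q (y - Pi.single l r⁻¹)` with
-- weights `p` and `r`.
lemma PosAbove.sub_single_or_sub_single (hq : RealStable q) {k l : κ}
    (h : PosAbove (q - dirDeriv (pairDir k l) q) y) {p r : ℝ} (hp : 0 < p) (hr : 0 < r)
    (hpr : p + r = 1) :
    PosAbove q (y - Pi.single k p⁻¹) ∨ PosAbove q (y - Pi.single l r⁻¹) := by
  have hqm := hq.mem_multiAffine
  have hy : PosAbove q y := h.of_sub_pairDir hqm
  have haverage : (q - dirDeriv (pairDir k l) q) y =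
      p * q (y - Pi.single k p⁻¹) + r * q (y - Pi.single l r⁻¹) := by
    rw [apply_sub_single hqm, apply_sub_single hqm, dirDeriv_pairDir, eq_sub_of_add_eq' hpr]
    simp only [Pi.sub_apply, LinearMap.add_apply, Pi.add_apply]
    field_simp [hp.ne', (eq_sub_of_add_eq' hpr ▸ hr : 0 < 1 - p).ne']
    ring
  by_contra! hneither
  have hk := not_lt.1 fun hk => hneither.1 (hy.sub_single hq k (inv_nonneg.2 hp.le) hk)
  have hl := not_lt.1 fun hl => hneither.2 (hy.sub_single hq l (inv_nonneg.2 hr.le) hl)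
  linarith [h.pos, mul_nonpos_of_nonneg_of_nonpos hp.le hk,
    mul_nonpos_of_nonneg_of_nonpos hr.le hl]

end Pair

variable {ι : Type*} [DecidableEq ι] [Fintype ι] {p : Bool → ℝ} {δ φ : ℝ}

/-- The total displacement of the variables indexed by `s` when every pair `(i, false)`, `(i, true)`
moves up by `δ` and its member chosen by `σ` then moves down by `(p (σ i))⁻¹`. -/
noncomputable def selectionShift (p : Bool → ℝ) (δ : ℝ) (σ : ι → Bool) (s : Finset ι) :
    ι × Bool → ℝ :=
  ∑ i ∈ s, (δ • pairDir (i, false) (i, true) - Pi.single (i, σ i) (p (σ i))⁻¹)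

lemma selectionShift_univ (p : Bool → ℝ) (δ : ℝ) (σ : ι → Bool) :
    selectionShift p δ σ Finset.univ = fun k => δ - if σ k.1 = k.2 then (p k.2)⁻¹ else 0 := by
  ext ⟨j, b⟩
  rw [selectionShift, Finset.sum_apply, Finset.sum_eq_single j]
  · cases σ j <;> cases b <;> simp [pairDir]
  · intro i _ hij
    simp [pairDir, hij.symm]
  · simp

lemma exists_posAbove_add_selectionShift (hp : ∀ b, 0 < p b) (hsum : p false + p true = 1)
    (hδ : 0 < δ) (hφ : 1 ≤ (1 - φ) * δ) (s : Finset ι) (q : (ι × Bool → ℝ) → ℝ)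
    (x : ι × Bool → ℝ) (hq : RealStable q) (hx : PosAbove q x)
    (hbar : ∀ i ∈ s, barrier (pairDir (i, false) (i, true)) q x ≤ φ) :
    ∃ σ : ι → Bool, PosAbove q (x + selectionShift p δ σ s) := by
  induction s using Finset.induction_on generalizing q x with
  | empty => exact ⟨fun _ => false, by simpa [selectionShift] using hx⟩
  | insert i s hi ih =>
    have hv := pairDir_nonneg (i, false) (i, true)
    have hbi := hbar i (Finset.mem_insert_self i s)
    have hφ1 : φ < 1 := by linarith [pos_of_mul_pos_left (one_pos.trans_le hφ) hδ.le]
    obtain ⟨σ, hσ⟩ := ih (q - dirDeriv (pairDir (i, false) (i, true)) q)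
      (x + δ • pairDir (i, false) (i, true)) (hq.sub_dirDeriv hv)
      ((hx.sub_dirDeriv hq hv (hbi.trans_lt hφ1)).mono
        (le_add_of_nonneg_right (smul_nonneg hδ.le hv)))
      fun j hj => barrier_sub_pairDir_le hq hx _ _ (pairDir_nonneg _ _) hδ hφ hbi
        (hbar j (Finset.mem_insert_of_mem hj))
    have hupdate (b : Bool) : x + selectionShift p δ (Function.update σ i b) (insert i s) =
        x + δ • pairDir (i, false) (i, true) + selectionShift p δ σ s -
          Pi.single (i, b) (p b)⁻¹ := by
      have hrest : selectionShift p δ (Function.update σ i b) s = selectionShift p δ σ s :=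
        Finset.sum_congr rfl fun j hj => by rw [Function.update_of_ne (ne_of_mem_of_not_mem hj hi)]
      rw [selectionShift, Finset.sum_insert hi, ← selectionShift, hrest, Function.update_self]
      abel
    rcases hσ.sub_single_or_sub_single hq (hp false) (hp true) hsum with h | h
    · exact ⟨Function.update σ i false, (hupdate false).symm ▸ h⟩
    · exact ⟨Function.update σ i true, (hupdate true).symm ▸ h⟩

end Selection

section DetOneAddDiagonalMul

variable {ι R : Type*} [DecidableEq ι] [Fintype ι] [CommRing R]

lemma det_one_add_diagonal_mul_add_single (G : Matrix ι ι R) (z : ι → R) (i : ι) (a : R) :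
    det (1 + diagonal (z + Pi.single i a) * G) =
      det (1 + diagonal z * G) + a * det ((1 + diagonal z * G).updateRow i (G i)) := by
  have hrow : 1 + diagonal (z + Pi.single i a) * G =
      (1 + diagonal z * G).updateRow i ((1 + diagonal z * G) i + a • G i) := by
    ext j k
    rcases eq_or_ne j i with rfl | hj
    · simp [diagonal_mul, add_mul, add_assoc]
    · simp [diagonal_mul, hj]
  rw [hrow, det_updateRow_add, det_updateRow_smul, updateRow_eq_self]

lemma coordDiff_det_one_add_diagonal_mul (G : Matrix ι ι R) (i : ι) (z : ι → R) :
    coordDiff i (fun z => det (1 + diagonal z * G)) z =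
      det ((1 + diagonal z * G).updateRow i (G i)) := by
  rw [coordDiff_apply, det_one_add_diagonal_mul_add_single, one_mul, add_sub_cancel_left]

lemma det_one_add_diagonal_mul_mem_multiAffine (G : Matrix ι ι R) :
    (fun z => det (1 + diagonal z * G)) ∈ multiAffine ι R := fun z i a => by
  rw [coordDiff_det_one_add_diagonal_mul]
  exact det_one_add_diagonal_mul_add_single G z i a

lemma coordDiff_det_one_add_diagonal_mul_zero (G : Matrix ι ι R) (i : ι) :
    coordDiff i (fun z => det (1 + diagonal z * G)) 0 = G i i := by
  rw [coordDiff_det_one_add_diagonal_mul]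
  simp [← cramer_transpose_apply]

end DetOneAddDiagonalMul

open scoped MatrixOrder ComplexOrder

section FrameOp

variable {n ι : Type*} [Fintype ι] [DecidableEq ι]

/-- The weighted frame operator `∑ i, x i • (vᵢ vᵢᴴ)` of the columns `vᵢ` of `V`. -/
noncomputable def frameOp (V : Matrix n ι ℂ) : (ι → ℝ) →ₗ[ℝ] Matrix n n ℂ where
  toFun x := V * diagonal (fun i => (x i : ℂ)) * Vᴴ
  map_add' x y := by
    rw [← Matrix.add_mul, ← Matrix.mul_add, diagonal_add]
    simp
  map_smul' c x := by
    rw [RingHom.id_apply, ← Matrix.smul_mul, ← Matrix.mul_smul, ← diagonal_smul]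
    congr 3
    ext i
    simp

lemma frameOp_apply (V : Matrix n ι ℂ) (x : ι → ℝ) :
    frameOp V x = V * diagonal (fun i => (x i : ℂ)) * Vᴴ := rfl

lemma isHermitian_frameOp (V : Matrix n ι ℂ) (x : ι → ℝ) : (frameOp V x).IsHermitian :=
  isHermitian_mul_mul_conjTranspose V (isHermitian_diagonal_iff.2 fun _ => Complex.conj_ofReal _)

section Order

variable [Finite n]

lemma frameOp_nonneg (V : Matrix n ι ℂ) {x : ι → ℝ} (hx : 0 ≤ x) : 0 ≤ frameOp V x :=
  nonneg_iff_posSemidef.2 <|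
    (PosSemidef.diagonal fun i => by simpa using hx i).mul_mul_conjTranspose_same V

lemma frameOp_mono (V : Matrix n ι ℂ) : Monotone (frameOp V) := fun x y hxy => by
  rw [← sub_nonneg, ← map_sub]
  exact frameOp_nonneg V (sub_nonneg.2 hxy)

lemma posDef_one_add_frameOp [DecidableEq n] (V : Matrix n ι ℂ) {x : ι → ℝ} (hx : 0 ≤ x) :
    (1 + frameOp V x).PosDef :=
  PosDef.one.add_posSemidef (nonneg_iff_posSemidef.1 (frameOp_nonneg V hx))

end Order

variable [Fintype n] [DecidableEq n]

lemma det_one_add_mul_diagonal_mul_ne_zero (V : Matrix n ι ℂ) {z : ι → ℂ}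
    (hz : ∀ i, 0 < (z i).im) : det (1 + V * diagonal z * Vᴴ) ≠ 0 := by
  intro hdet
  obtain ⟨y, hy, hker⟩ := exists_mulVec_eq_zero_iff.2 hdet
  rw [add_mulVec, one_mulVec, ← mulVec_mulVec, ← mulVec_mulVec] at hker
  have hform : star y ⬝ᵥ y + ∑ i, z i * Complex.normSq ((Vᴴ *ᵥ y) i) = 0 := by
    have hsum : star y ⬝ᵥ (V *ᵥ diagonal z *ᵥ Vᴴ *ᵥ y) =
        ∑ i, z i * Complex.normSq ((Vᴴ *ᵥ y) i) := by
      rw [dotProduct_mulVec, ← conjTranspose_conjTranspose V, ← star_mulVec,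
        conjTranspose_conjTranspose]
      refine Finset.sum_congr rfl fun i _ => ?_
      rw [mulVec_diagonal, Pi.star_apply, Complex.normSq_eq_conj_mul_self]
      exact mul_left_comm _ _ _
    rw [← hsum, ← dotProduct_add, hker, dotProduct_zero]
  have him : ∑ i, (z i).im * Complex.normSq ((Vᴴ *ᵥ y) i) = 0 := by
    have hself : (star y ⬝ᵥ y).im = 0 := (Complex.le_def.1 (dotProduct_star_self_nonneg y)).2.symm
    simpa [hself] using congrArg Complex.im hform
  have hVy : Vᴴ *ᵥ y = 0 := by
    ext i
    have hterm := (Finset.sum_eq_zero_iff_of_nonneg fun i _ =>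
      mul_nonneg (hz i).le (Complex.normSq_nonneg _)).1 him i (Finset.mem_univ i)
    exact Complex.normSq_eq_zero.1 ((mul_eq_zero.1 hterm).resolve_left (hz i).ne')
  rw [hVy, mulVec_zero, mulVec_zero, add_zero] at hker
  exact hy hker

/-- The polynomial `det (1 + ∑ i, x i • (vᵢ vᵢᴴ))` of the weights `x`, where the `vᵢ` are the
columns of `V`; the determinant is real, and taking the real part only changes the codomain. -/
noncomputable def framePoly (V : Matrix n ι ℂ) (x : ι → ℝ) : ℝ := (det (1 + frameOp V x)).re

lemma isStableExtension_framePoly (V : Matrix n ι ℂ) :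
    IsStableExtension (fun z => det (1 + diagonal z * (Vᴴ * V))) (framePoly V) where
  mem_multiAffine := det_one_add_diagonal_mul_mem_multiAffine _
  ne_zero z hz := by
    rw [← Matrix.mul_assoc, ← det_one_add_mul_comm, ← Matrix.mul_assoc]
    exact det_one_add_mul_diagonal_mul_ne_zero V hz
  apply_ofReal x := by
    rw [← Matrix.mul_assoc, ← det_one_add_mul_comm, ← Matrix.mul_assoc, ← frameOp_apply]
    refine (Complex.conj_eq_iff_re.1 ?_).symm
    rw [starRingEnd_apply, ← det_conjTranspose,
      (isHermitian_one.add (isHermitian_frameOp V x)).eq]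

lemma realStable_framePoly (V : Matrix n ι ℂ) : RealStable (framePoly V) :=
  ⟨_, isStableExtension_framePoly V⟩

lemma framePoly_zero (V : Matrix n ι ℂ) : framePoly V 0 = 1 := by
  simp [framePoly]

lemma coordDiff_framePoly_zero (V : Matrix n ι ℂ) (i : ι) :
    coordDiff i (framePoly V) 0 = ((Vᴴ * V) i i).re := by
  rw [← coordDiff_det_one_add_diagonal_mul_zero (Vᴴ * V) i]
  have h := coordDiff_apply_ofReal (Q := fun z => det (1 + diagonal z * (Vᴴ * V)))
    (isStableExtension_framePoly V).apply_ofReal i 0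
  exact (congrArg Complex.re h).symm

lemma posAbove_framePoly_zero (V : Matrix n ι ℂ) : PosAbove (framePoly V) 0 :=
  fun _ hx => (Complex.lt_def.1 (posDef_one_add_frameOp V hx).det_pos).1

end FrameOp

section PosSemidef

variable {n ι : Type*} [Fintype n] [DecidableEq n]

-- A negative eigenvalue of `M` relative to `N` would make the segment from `N` to `M` singular.
lemma posSemidef_of_det_ne_zero {M N : Matrix n n ℂ} (hM : M.IsHermitian) (hN : N.PosDef)
    (hdet : ∀ u : ℝ, 0 ≤ u → u ≤ 1 → det (u • M + (1 - u) • N) ≠ 0) : M.PosSemidef := by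
  obtain ⟨Y, hY⟩ := CStarAlgebra.nonneg_iff_eq_star_mul_self.1 hN.posSemidef.nonneg
  have hYunit : IsUnit Y := by
    have h := (isUnit_iff_isUnit_det _).1 hN.isUnit
    rw [hY, det_mul] at h
    exact (isUnit_iff_isUnit_det _).2 (isUnit_of_mul_isUnit_right h)
  obtain ⟨Z, hZY⟩ := hYunit.exists_left_inv
  obtain ⟨C, hC, hMC⟩ : ∃ C : Matrix n n ℂ, C.IsHermitian ∧ M = star Y * C * Y := by
    refine ⟨star Z * M * Z, isHermitian_conjTranspose_mul_mul Z hM, ?_⟩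
    have hstar : star Y * star Z = 1 := by rw [← star_mul, hZY, star_one]
    rw [← mul_assoc, ← mul_assoc, hstar, one_mul, mul_assoc, hZY, mul_one]
  rw [hMC, hYunit.posSemidef_star_left_conjugate_iff, hC.posSemidef_iff_eigenvalues_nonneg]
  intro j
  by_contra! hneg
  have hsing : det (C - hC.eigenvalues j • 1) = 0 := by
    have h := hC.eigenvalues_mem_spectrum_real j
    rw [spectrum.mem_iff, IsUnit.sub_iff, isUnit_iff_isUnit_det, isUnit_iff_ne_zero, not_not,
      Algebra.algebraMap_eq_smul_one] at h
    exact h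
  generalize hC.eigenvalues j = ν at hneg hsing
  have hpos : 0 < 1 - ν := by linarith [show ν < 0 from hneg]
  refine hdet (1 - ν)⁻¹ (inv_nonneg.2 hpos.le)
    (inv_le_one_of_one_le₀ (by linarith [show ν < 0 from hneg])) ?_
  have hsegment : (1 - ν)⁻¹ • M + (1 - (1 - ν)⁻¹) • N =
      star Y * ((1 - ν)⁻¹ • (C - ν • 1)) * Y := by
    have hcoeff : 1 - (1 - ν)⁻¹ = -((1 - ν)⁻¹ * ν) := by
      field_simp
      ring
    rw [hcoeff, hMC, hY]
    simp only [smul_sub, mul_sub, sub_mul, mul_smul_comm, smul_mul_assoc, mul_one]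
    module
  rw [hsegment, det_mul, det_mul, det_smul_of_tower, hsing]
  simp

variable [Fintype ι] [DecidableEq ι]

lemma nonneg_one_add_frameOp (V : Matrix n ι ℂ) {y : ι → ℝ} (hy : PosAbove (framePoly V) y) :
    0 ≤ 1 + frameOp V y := by
  refine nonneg_iff_posSemidef.2 (posSemidef_of_det_ne_zero
    (isHermitian_one.add (isHermitian_frameOp V y))
    (posDef_one_add_frameOp V (le_sup_right : 0 ≤ y ⊔ 0)) fun u _ hu hzero => ?_)
  have hsegment : u • (1 + frameOp V y) + (1 - u) • (1 + frameOp V (y ⊔ 0)) =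
      1 + frameOp V (y + (1 - u) • (y ⊔ 0 - y)) := by
    simp only [map_add, map_smul, map_sub]
    module
  refine (hy (y + (1 - u) • (y ⊔ 0 - y)) ?_).ne' ?_
  · exact le_add_of_nonneg_right (smul_nonneg (sub_nonneg.2 hu) (sub_nonneg.2 le_sup_left))
  · rw [framePoly, ← hsegment, hzero, Complex.zero_re]

end PosSemidef

section FrameSelection

variable {n ι : Type*} [Fintype n] [DecidableEq n] [Fintype ι] [DecidableEq ι]

lemma exists_selection_frameOp {p : Bool → ℝ} {δ φ : ℝ} (hp : ∀ b, 0 < p b)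
    (hsum : p false + p true = 1) (hδ : 0 < δ) (hφ : 1 ≤ (1 - φ) * δ) (V : Matrix n (ι × Bool) ℂ)
    (hV : ∀ i, ((Vᴴ * V) (i, false) (i, false)).re + ((Vᴴ * V) (i, true) (i, true)).re ≤ φ) :
    ∃ σ : ι → Bool,
      0 ≤ 1 + frameOp V fun k => δ - if σ k.1 = k.2 then (p k.2)⁻¹ else 0 := by
  obtain ⟨σ, hσ⟩ := exists_posAbove_add_selectionShift hp hsum hδ hφ Finset.univ (framePoly V) 0
    (realStable_framePoly V) (posAbove_framePoly_zero V) fun i _ => by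
      rw [barrier, framePoly_zero, div_one, dirDeriv_pairDir, LinearMap.add_apply, Pi.add_apply,
        coordDiff_framePoly_zero, coordDiff_framePoly_zero]
      exact hV i
  rw [zero_add, selectionShift_univ] at hσ
  exact ⟨σ, nonneg_one_add_frameOp V hσ⟩

end FrameSelection

section TwoSidedSelection

variable {n ι : Type*} [Fintype ι] [DecidableEq ι]

lemma frameOp_one (V : Matrix n ι ℂ) : frameOp V 1 = V * Vᴴ := by
  simp [frameOp_apply]

lemma frameOp_smul_left (r : ℝ) (V : Matrix n ι ℂ) (x : ι → ℝ) :
    frameOp (r • V) x = r ^ 2 • frameOp V x := by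
  simp only [frameOp_apply, conjTranspose_smul, star_trivial, Matrix.smul_mul, Matrix.mul_smul,
    smul_smul, sq]

lemma frameOp_mul_diagonal (V : Matrix n ι ℂ) (s x : ι → ℝ) :
    frameOp (V * diagonal fun i => (s i : ℂ)) x = frameOp V (s * x * s) := by
  have hstar : (diagonal fun i => (s i : ℂ))ᴴ = diagonal fun i => (s i : ℂ) :=
    isHermitian_diagonal_iff.2 fun _ => Complex.conj_ofReal _
  rw [frameOp_apply, frameOp_apply, conjTranspose_mul, hstar]
  simp only [Matrix.mul_assoc, ← Matrix.mul_assoc (diagonal _), diagonal_mul_diagonal]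
  simp [mul_assoc]

lemma frameOp_blockDiagonal {o : Type*} [DecidableEq o] [Fintype o] (V : Matrix n ι ℂ)
    (x : ι × o → ℝ) :
    frameOp (blockDiagonal fun _ => V) x = blockDiagonal fun b => frameOp V fun i => x (i, b) := by
  simp only [frameOp_apply, blockDiagonal_mul, blockDiagonal_conjTranspose]
  rw [blockDiagonal_diagonal]

variable [Fintype n] [DecidableEq n]

lemma exists_selection_frameOp_forall {p : Bool → ℝ} {δ φ : ℝ} (hp : ∀ b, 0 < p b)
    (hsum : p false + p true = 1) (hδ : 0 < δ) (hφ : 1 ≤ (1 - φ) * δ) (V : Matrix n ι ℂ)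
    (hV : ∀ i, 2 * ((Vᴴ * V) i i).re ≤ φ) :
    ∃ σ : ι → Bool, ∀ b,
      0 ≤ 1 + frameOp V fun i => δ - if σ i = b then (p b)⁻¹ else 0 := by
  have hgram : (blockDiagonal fun _ : Bool => V)ᴴ * (blockDiagonal fun _ : Bool => V) =
      blockDiagonal fun _ => Vᴴ * V := by
    rw [blockDiagonal_conjTranspose, blockDiagonal_mul]
  obtain ⟨σ, hσ⟩ := exists_selection_frameOp hp hsum hδ hφ (blockDiagonal fun _ => V) fun i => by
    rw [hgram, blockDiagonal_apply_eq, blockDiagonal_apply_eq, ← two_mul]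
    exact hV i
  refine ⟨σ, fun b => ?_⟩
  rw [frameOp_blockDiagonal, ← blockDiagonal_one, ← blockDiagonal_add, nonneg_iff_posSemidef] at hσ
  have hblock := hσ.submatrix fun a => (a, b)
  rw [nonneg_iff_posSemidef]
  convert hblock using 1
  ext a c
  simp [blockDiagonal_apply, one_apply]

end TwoSidedSelection

section OperatorNorm

lemma norm_le_of_neg_algebraMap_le {A : Type*} [CStarAlgebra A] [PartialOrder A]
    [StarOrderedRing A] {a : A} {r : ℝ} (hr : 0 ≤ r) (hneg : -algebraMap ℝ A r ≤ a)
    (hle : a ≤ algebraMap ℝ A r) : ‖a‖ ≤ r := by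
  obtain _ | _ := subsingleton_or_nontrivial A
  · simpa [Subsingleton.elim a 0] using hr
  have ha : IsSelfAdjoint a := by
    have h := IsSelfAdjoint.of_nonneg (sub_nonneg.2 hle)
    simpa using ((IsSelfAdjoint.all r).algebraMap A).sub h
  rw [← map_neg] at hneg
  rcases CStarAlgebra.norm_or_neg_norm_mem_spectrum ha with h | h
  · exact (le_algebraMap_iff_spectrum_le ha).1 hle _ h
  · exact neg_le_neg_iff.1 ((algebraMap_le_iff_le_spectrum ha).1 hneg _ h)

open scoped Matrix.Norms.L2Operator in
lemma norm_toEuclideanCLM_le {n : Type*} [Fintype n] [DecidableEq n] {A : Matrix n n ℂ} {r : ℝ}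
    (hr : 0 ≤ r) (hneg : -(r • 1) ≤ A) (hle : A ≤ r • 1) : ‖toEuclideanCLM (𝕜 := ℂ) A‖ ≤ r := by
  rw [← Algebra.algebraMap_eq_smul_one] at hneg hle
  rw [l2_opNorm_toEuclideanCLM]
  exact norm_le_of_neg_algebraMap_le hr hneg hle

end OperatorNorm

section GramDiagonal

variable {n ι : Type*} [Fintype n]

lemma gram_diag_nonneg [Finite ι] (V : Matrix n ι ℂ) (i : ι) : 0 ≤ (Vᴴ * V) i i :=
  (posSemidef_conjTranspose_mul_self V).diag_nonneg

lemma eq_zero_of_gram_diag_nonpos [Finite ι] {V : Matrix n ι ℂ}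
    (hV : ∀ i, ((Vᴴ * V) i i).re ≤ 0) : V = 0 := by
  cases nonempty_fintype ι
  refine trace_conjTranspose_mul_self_eq_zero_iff.1 (Finset.sum_eq_zero fun i _ => ?_)
  have hnonneg := Complex.nonneg_iff.1 (gram_diag_nonneg V i)
  exact Complex.ext ((hV i).antisymm hnonneg.1) hnonneg.2.symm

variable [Fintype ι]

lemma gram_mul_diagonal_diag [DecidableEq ι] (V : Matrix n ι ℂ) (s : ι → ℝ) (i : ι) :
    (((V * diagonal fun i => (s i : ℂ))ᴴ * (V * diagonal fun i => (s i : ℂ))) i i).re =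
      s i ^ 2 * ((Vᴴ * V) i i).re := by
  rw [conjTranspose_mul, isHermitian_diagonal_iff.2 fun _ => Complex.conj_ofReal _,
    Matrix.mul_assoc, ← Matrix.mul_assoc Vᴴ, diagonal_mul, mul_diagonal, mul_comm _ (s i : ℂ),
    ← mul_assoc, ← Complex.ofReal_mul, Complex.re_ofReal_mul, sq]

variable [DecidableEq n]

open scoped Matrix.Norms.L2Operator in
lemma conjTranspose_mul_self_le_one [DecidableEq ι] {V : Matrix n ι ℂ} (hV : V * Vᴴ ≤ 1) :
    Vᴴ * V ≤ 1 := by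
  have hnorm := (CStarAlgebra.norm_le_one_iff_of_nonneg (V * Vᴴ)
    (nonneg_iff_posSemidef.2 (posSemidef_self_mul_conjTranspose V))).2 hV
  refine (CStarAlgebra.norm_le_one_iff_of_nonneg (Vᴴ * V)
    (nonneg_iff_posSemidef.2 (posSemidef_conjTranspose_mul_self V))).1 ?_
  have h := l2_opNorm_conjTranspose_mul_self Vᴴ
  rw [conjTranspose_conjTranspose, l2_opNorm_conjTranspose] at h
  rwa [l2_opNorm_conjTranspose_mul_self, ← h]

lemma gram_diag_le_one {V : Matrix n ι ℂ} (hV : V * Vᴴ ≤ 1) (i : ι) :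
    ((Vᴴ * V) i i).re ≤ 1 := by
  classical
  have h := (le_iff.1 (conjTranspose_mul_self_le_one hV)).diag_nonneg (i := i)
  simpa using (Complex.nonneg_iff.1 h).1

end GramDiagonal

section Discrepancy

variable {n ι : Type*} [Fintype n] [DecidableEq n] [Fintype ι] [DecidableEq ι]

lemma exists_selection_frameOp_le {p : Bool → ℝ} {l : ℝ} (hp : ∀ b, 0 < p b)
    (hsum : p false + p true = 1) (hl : 0 < l) (V : Matrix n ι ℂ)
    (hV : ∀ i, ((Vᴴ * V) i i).re ≤ l ^ 2) :
    ∃ σ : ι → Bool, ∀ b, frameOp V ({i | σ i = b}.indicator 1) ≤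
      p b • ((1 + 2 * l) • (l • 1 + frameOp V 1)) := by
  obtain ⟨c, hc⟩ : ∃ c, c = (1 + 2 * l) * l := ⟨_, rfl⟩
  have hcpos : 0 < c := hc ▸ by positivity
  have hsqrt : (√c)⁻¹ ^ 2 = c⁻¹ := by rw [inv_pow, Real.sq_sqrt hcpos.le]
  obtain ⟨σ, hσ⟩ := exists_selection_frameOp_forall (δ := 1 + 2 * l) (φ := 2 * l ^ 2 / c) hp hsum
    (by positivity) (le_of_eq (by rw [hc]; field_simp; ring)) ((√c)⁻¹ • V) fun i => by
      have hgram : ((((√c)⁻¹ • V)ᴴ * ((√c)⁻¹ • V)) i i).re = c⁻¹ * ((Vᴴ * V) i i).re := by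
        simp [← hsqrt, sq, mul_assoc]
      rw [hgram, mul_div_assoc, div_eq_inv_mul]
      gcongr
      exact hV i
  refine ⟨σ, fun b => ?_⟩
  have hweights : (fun i => 1 + 2 * l - if σ i = b then (p b)⁻¹ else 0) =
      (1 + 2 * l) • (1 : ι → ℝ) - (p b)⁻¹ • {i | σ i = b}.indicator 1 := by
    ext i
    simp [Set.indicator_apply]
  have hscaled := smul_nonneg (mul_pos (hp b) hcpos).le (hσ b)
  rw [frameOp_smul_left, hsqrt, hweights, map_sub, map_smul, map_smul] at hscaled
  rw [← sub_nonneg]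
  convert hscaled using 1
  have hpb := (hp b).ne'
  match_scalars <;> field_simp
  rw [hc, mul_comm]

lemma exists_finset_norm_frameOp_sub_le_of_pos {t l : ℝ} (ht₀ : 0 < t) (ht₁ : t < 1) (hl₀ : 0 < l)
    (hl₁ : l ≤ 1) (V : Matrix n ι ℂ) (hV₁ : V * Vᴴ ≤ 1) (hV : ∀ i, ((Vᴴ * V) i i).re ≤ l ^ 2) :
    ∃ T : Finset ι, ‖toEuclideanCLM (𝕜 := ℂ)
      (frameOp V ((T : Set ι).indicator 1) - t • frameOp V 1)‖ ≤ 5 * l := by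
  obtain ⟨σ, hσ⟩ := exists_selection_frameOp_le (p := fun b => bif b then t else 1 - t)
    (by simp [ht₀, ht₁]) (by simp) hl₀ V hV
  have hcompl : frameOp V ({i | σ i = false}.indicator 1) +
      frameOp V ({i | σ i = true}.indicator 1) = frameOp V 1 := by
    rw [← map_add]
    congr 1
    ext i
    cases h : σ i <;> simp [h]
  have hbound {r : ℝ} (hr₀ : 0 ≤ r) (hr₁ : r ≤ 1) :
      r • ((1 + 2 * l) • (l • 1 + frameOp V 1)) ≤ r • frameOp V 1 + (5 * l) • 1 := by
    have hrem : 0 ≤ (5 * l - r * (3 * l + 2 * l ^ 2)) • (1 : Matrix n n ℂ) +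
        (2 * l * r) • (1 - frameOp V 1) := by
      refine add_nonneg (smul_nonneg ?_ zero_le_one) (smul_nonneg (by positivity) ?_)
      · nlinarith [mul_le_mul hr₁ hl₁ hl₀.le zero_le_one]
      · rwa [frameOp_one, sub_nonneg]
    rw [← sub_nonneg]
    convert hrem using 1
    module
  have htrue : frameOp V _ ≤ t • frameOp V 1 + (5 * l) • 1 := (hσ true).trans (hbound ht₀.le ht₁.le)
  have hfalse : frameOp V _ ≤ (1 - t) • frameOp V 1 + (5 * l) • 1 :=
    (hσ false).trans (hbound (sub_nonneg.2 ht₁.le) (sub_le_self 1 ht₀.le))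
  refine ⟨Finset.univ.filter fun i => σ i = true, norm_toEuclideanCLM_le (by positivity) ?_ ?_⟩
  all_goals rw [Finset.coe_filter_univ]
  · rw [eq_sub_of_add_eq hcompl, ← sub_nonneg] at hfalse
    rw [← sub_nonneg]
    convert hfalse using 1
    module
  · rw [sub_le_iff_le_add']
    exact htrue

lemma exists_finset_norm_frameOp_sub_le {t ε : ℝ} (ht₀ : 0 ≤ t) (ht₁ : t ≤ 1)
    (V : Matrix n ι ℂ) (hV₁ : V * Vᴴ ≤ 1) (hV : ∀ i, ((Vᴴ * V) i i).re ≤ ε) :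
    ∃ T : Finset ι, ‖toEuclideanCLM (𝕜 := ℂ)
      (frameOp V ((T : Set ι).indicator 1) - t • frameOp V 1)‖ ≤ 5 * √(min ε 1) := by
  have hV' (i : ι) : ((Vᴴ * V) i i).re ≤ min ε 1 := le_min (hV i) (gram_diag_le_one hV₁ i)
  rcases le_or_gt (min ε 1) 0 with hε | hε
  · refine ⟨∅, ?_⟩
    simp [eq_zero_of_gram_diag_nonpos fun i => (hV' i).trans hε, frameOp_apply]
  rcases ht₀.eq_or_lt with rfl | ht₀
  · exact ⟨∅, by simp [frameOp_apply]⟩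
  rcases ht₁.eq_or_lt with rfl | ht₁
  · exact ⟨Finset.univ, by simp⟩
  exact exists_finset_norm_frameOp_sub_le_of_pos ht₀ ht₁ (Real.sqrt_pos.2 hε)
    (Real.sqrt_le_one.2 (min_le_right ε 1)) V hV₁ fun i => by
      rw [Real.sq_sqrt hε.le]
      exact hV' i

end Discrepancy

lemma sqrt_min_one_le_rpow (ε : ℝ) : √(min ε 1) ≤ ε ^ ((1 : ℝ) / 4) := by
  rcases lt_or_ge ε 0 with hneg | hnonneg
  · rw [Real.sqrt_eq_zero_of_nonpos ((min_le_left ε 1).trans hneg.le), Real.rpow_def_of_neg hneg]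
    exact mul_nonneg (Real.exp_pos _).le (Real.cos_nonneg_of_neg_pi_div_two_le_of_le
      (by linarith [Real.pi_pos]) (by linarith [Real.pi_pos]))
  have hmin : 0 ≤ min ε 1 := le_min hnonneg zero_le_one
  calc √(min ε 1) = min ε 1 ^ ((1 : ℝ) / 2) := Real.sqrt_eq_rpow _
    _ ≤ min ε 1 ^ ((1 : ℝ) / 4) := Real.rpow_le_rpow_of_exponent_ge'
        hmin (min_le_right ε 1) (by norm_num) (by norm_num)
    _ ≤ ε ^ ((1 : ℝ) / 4) := Real.rpow_le_rpow hmin (min_le_left ε 1) (by norm_num)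

lemma frameOp_indicator_one {m : ℕ} {P : Matrix (Fin m) (Fin m) ℂ} (hP : Pᴴ = P)
    (S : Finset (Fin m)) :
    frameOp P ((S : Set (Fin m)).indicator 1) = P * diagProj S * P := by
  rw [frameOp_apply, hP, diagProj]
  congr! 4 with i
  by_cases hi : i ∈ S <;> simp [hi]

theorem stmt11_general {n ι : Type*} [Fintype n] [DecidableEq n] [Fintype ι] [DecidableEq ι]
    {t ε : ℝ} (ht₀ : 0 ≤ t) (ht₁ : t ≤ 1) (V : Matrix n ι ℂ) (hV₁ : V * Vᴴ ≤ 1) (S : Finset ι)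
    (hV : ∀ i ∈ S, ((Vᴴ * V) i i).re ≤ ε) :
    ∃ S' ⊆ S, ‖toEuclideanCLM (𝕜 := ℂ) (frameOp V ((S' : Set ι).indicator 1) -
      t • frameOp V ((S : Set ι).indicator 1))‖ ≤ 5 * √(min ε 1) := by
  rcases S.eq_empty_or_nonempty with rfl | ⟨j, hj⟩
  · exact ⟨∅, subset_rfl, by simp [frameOp_apply]⟩
  have hε : 0 ≤ ε := (Complex.nonneg_iff.1 (gram_diag_nonneg V j)).1.trans (hV j hj)
  obtain ⟨s, hs⟩ : ∃ s : ι → ℝ, s = (S : Set ι).indicator 1 := ⟨_, rfl⟩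
  have hs_one : s * 1 * s = s := by
    ext i
    simp [hs, Set.indicator_apply]
  have hs_le : s ≤ 1 := hs ▸ Set.indicator_le_self' fun _ _ => zero_le_one
  obtain ⟨T, hT⟩ := exists_finset_norm_frameOp_sub_le ht₀ ht₁ (V * diagonal fun i => (s i : ℂ))
    (ε := ε) (by
      rw [← frameOp_one, frameOp_mul_diagonal, hs_one]
      exact (frameOp_mono V hs_le).trans (frameOp_one V ▸ hV₁))
    fun i => by
      rw [gram_mul_diagonal_diag, hs]
      by_cases hi : i ∈ S <;> simp [hi, hV, hε]
  refine ⟨T ∩ S, Finset.inter_subset_right, ?_⟩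
  rw [frameOp_mul_diagonal, frameOp_mul_diagonal, hs_one, hs] at hT
  convert hT using 6
  ext i
  by_cases hi : i ∈ S <;> simp [hi, Set.indicator_apply]

/-- There is a universal constant `C > 0` such that the following holds: if
`P ∈ M_m(ℂ)` is a projection matrix, `Q` is the diagonal projection with support
`S ⊆ {1, …, m}`, `t ∈ [0,1]`, and the diagonal entries of `QPQ` are each at most `ε`
(i.e. `P i i ≤ ε` for `i ∈ S`), then there is a diagonal projection `Q' ≤ Q`
(i.e. with support `S' ⊆ S`) such that `‖PQ'P − t PQP‖ ≤ C ε^(1/4)`. -/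
theorem stmt11 :
    ∃ C : ℝ, 0 < C ∧
      ∀ (m : ℕ) (ε : ℝ) (P : Matrix (Fin m) (Fin m) ℂ),
        Pᴴ = P → P * P = P →
        ∀ S : Finset (Fin m),
          (∀ i ∈ S, (P i i).re ≤ ε) →
          ∀ t : ℝ, 0 ≤ t → t ≤ 1 →
            ∃ S' : Finset (Fin m), S' ⊆ S ∧
              opNorm (P * diagProj S' * P - (t : ℂ) • (P * diagProj S * P))
                ≤ C * ε ^ ((1 : ℝ) / 4) := by
  refine ⟨5, by norm_num, fun m ε P hP hPP S hS t ht₀ ht₁ => ?_⟩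
  have hP_le : P * Pᴴ ≤ 1 := by
    rw [hP, hPP]
    exact IsStarProjection.le_one ⟨hPP, hP⟩
  obtain ⟨S', hS', hnorm⟩ := stmt11_general ht₀ ht₁ P hP_le S (ε := ε) (by rwa [hP, hPP])
  rw [frameOp_indicator_one hP, frameOp_indicator_one hP] at hnorm
  exact ⟨S', hS', hnorm.trans (by gcongr; exact sqrt_min_one_le_rpow ε)⟩
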